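/- Let 𝒞 be a class of finite ordered sets (closed under order-isomorphism) for which the Automorphism Conjecture holds, and let ℒ_𝒞 be the class of lexicographic sums L{P_t | t ∈ T} such that all P_t ∈ 𝒞 and either T ∈ 𝒞 is indecomposable or a chain, or T ∈ 𝒞 contains no nontrivial order-autonomous antichain and all P_t are antichains. Then the Automorphism Conjecture holds for ℒ_𝒞. -/

import Mathlib

/-!
Write `a(Q) = |Aut Q|` and `e(Q) = |End Q|`, and let `π : β → T` be the projection of a
lexicographic sum `β` onto its index set, whose fibres are the blocks `P_t`.

* If `S` is order-autonomous in `β` and `F` is a set of endomorphisms of `S`, then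
  `a(β) · |F| ≤ a(S) · |{φ ∘ f̂ : φ ∈ Aut β, f ∈ F}|`, where `f̂` extends `f` by the identity
  (`card_aut_mul_le`). The reason: automorphisms of `β` with a common restriction to the complement
  of `S` differ by an automorphism of `S`, and `φ ∘ f̂` remembers that restriction.
* With `F = End S` this gives `a(β)/e(β) ≤ a(S)/e(S)`, so a single large block suffices.
* If all blocks have at most `N` elements, take for `F` one constant map. The maps obtained
  from distinct nontrivial blocks are distinct since their kernels differ, so that
  `m · a(β) ≤ N ^ N · e(β)` when there are `m` nontrivial blocks. Many nontrivial blocks suffice.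
* In the remaining case all blocks are small, few of them are nontrivial, and `T` is large. Under
  each of the three hypotheses on `T`, if `|T| ≥ 3`, then automorphisms of `β` permute the blocks
  (`preserves_of_indecomposable`, `preserves_of_chain`, `preserves_of_antichains`), hence
  `a(β) ≤ M · a(T)` with `M` bounded, whereas `e(T) ≤ e(β)`. The conjecture for `T` finishes the
  proof.
-/

/-- The Automorphism Conjecture holds for a class `C` of finite ordered sets:
for every `ε > 0` there is `N` such that every member with at least `N` elements
has `|Aut| < ε · |End|`. -/
def AutoConjHoldsFor (C : ∀ β : Type, PartialOrder β → Fintype β → Prop) : Prop :=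
  ∀ ε : ℝ, 0 < ε → ∃ N : ℕ, ∀ (β : Type) [iβ : PartialOrder β] [fβ : Fintype β],
    C β iβ fβ → N ≤ Fintype.card β →
    (Nat.card (β ≃o β) : ℝ) < ε * (Set.ncard {f : β → β | Monotone f} : ℝ)

/-- Order-autonomous subset. -/
def OrdAutonomous (β : Type) [PartialOrder β] (S : Set β) : Prop :=
  S.Nonempty ∧ ∀ z ∉ S,
    ((∃ a ∈ S, z < a) → ∀ a ∈ S, z < a) ∧ ((∃ a ∈ S, a < z) → ∀ a ∈ S, a < z)

/-- Nontrivial order-autonomous subset: order-autonomous with `1 < |S| < |β|`. -/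
def NontrivOrdAutonomous (β : Type) [PartialOrder β] [Fintype β] (S : Set β) : Prop :=
  OrdAutonomous β S ∧ S.ncard ≠ 1 ∧ S.ncard ≠ Fintype.card β

/-- The lexicographic-sum order on `Σ t, P t`:
`a ≤ b` iff `a.1 < b.1`, or `a.1 = b.1` and `a.2 ≤ b.2` in the piece. -/
def lexLE {T : Type} [PartialOrder T] {P : T → Type} [∀ t, PartialOrder (P t)]
    (a b : Σ t, P t) : Prop :=
  a.1 < b.1 ∨ ∃ h : a.1 = b.1, h ▸ a.2 ≤ b.2

/-- The data making `β` a lexicographic sum `L{P_t | t ∈ T}` of members of `C`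
over an index set `T ∈ C` that is indecomposable or a chain, or has no nontrivial
order-autonomous antichain while all pieces are antichains. -/
def LexWitness (C : ∀ β : Type, PartialOrder β → Fintype β → Prop)
    (β : Type) [PartialOrder β]
    (T : Type) [iT : PartialOrder T] [fT : Fintype T]
    (P : T → Type) [iP : ∀ t, PartialOrder (P t)] [fP : ∀ t, Fintype (P t)] : Prop :=
  Nonempty T ∧ (∀ t, Nonempty (P t)) ∧
    C T iT fT ∧ (∀ t, C (P t) (iP t) (fP t)) ∧
    (((¬ ∃ S : Set T, NontrivOrdAutonomous T S) ∨ (∀ x y : T, x ≤ y ∨ y ≤ x)) ∨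
      ((¬ ∃ S : Set T, NontrivOrdAutonomous T S ∧ IsAntichain (· ≤ ·) S) ∧
        ∀ t, ∀ x y : P t, x ≤ y → x = y)) ∧
    ∃ e : β ≃ (Σ t, P t), ∀ x y : β, x ≤ y ↔ lexLE (e x) (e y)

/-- The class `ℒ_C` of lexicographic sums built from the class `C`. -/
def LexClass (C : ∀ β : Type, PartialOrder β → Fintype β → Prop)
    (β : Type) (iβ : PartialOrder β) (fβ : Fintype β) : Prop :=
  ∃ (T : Type) (iT : PartialOrder T) (fT : Fintype T) (P : T → Type)
    (iP : ∀ t, PartialOrder (P t)) (fP : ∀ t, Fintype (P t)),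
    @LexWitness C β iβ T iT fT P iP fP

open Classical in
/-- Extension of a self-map of `S` by the identity outside of `S`. -/
noncomputable def extendId {β : Type} (S : Set β) (f : S → S) (x : β) : β :=
  if h : x ∈ S then f ⟨x, h⟩ else x

theorem extendId_mem {β : Type} {S : Set β} (f : S → S) {x : β} (h : x ∈ S) :
    extendId S f x = f ⟨x, h⟩ := by simp [extendId, h]

theorem extendId_not_mem {β : Type} {S : Set β} (f : S → S) {x : β} (h : x ∉ S) :
    extendId S f x = x := by simp [extendId, h]

theorem extendId_monotone {β : Type} [PartialOrder β] {S : Set β} (hS : OrdAutonomous β S)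
    {f : S → S} (hf : Monotone f) : Monotone (extendId S f) := by
  intro x y hxy
  by_cases hx : x ∈ S <;> by_cases hy : y ∈ S
  · rw [extendId_mem f hx, extendId_mem f hy]
    exact hf hxy
  · rw [extendId_mem f hx, extendId_not_mem f hy]
    have hlt : x < y := lt_of_le_of_ne hxy (fun h => hy (h ▸ hx))
    exact ((hS.2 y hy).2 ⟨x, hx, hlt⟩ _ (f ⟨x, hx⟩).2).le
  · rw [extendId_not_mem f hx, extendId_mem f hy]
    have hlt : x < y := lt_of_le_of_ne hxy (fun h => hx (h ▸ hy))
    exact ((hS.2 x hx).1 ⟨y, hy, hlt⟩ _ (f ⟨y, hy⟩).2).le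
  · rw [extendId_not_mem f hx, extendId_not_mem f hy]
    exact hxy

/-- An automorphism that is the identity outside of `S` restricts to an automorphism of `S`. -/
def restrictIso {β : Type} [PartialOrder β] (S : Set β) (ψ : β ≃o β) (h : ∀ x ∉ S, ψ x = x) :
    S ≃o S where
  toFun x := ⟨ψ x, by
    by_contra hx
    have hfix := ψ.injective (h _ hx)
    rw [hfix] at hx
    exact hx x.2⟩
  invFun x := ⟨ψ.symm x, by
    by_contra hx
    have := h _ hx
    rw [ψ.apply_symm_apply] at this
    exact hx (this ▸ x.2)⟩
  left_inv x := by simp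
  right_inv x := by simp
  map_rel_iff' := by simp

/-- The maps `φ ∘ f̂` with `φ ∈ Aut β` and `f ∈ F`. -/
def autComp {β : Type} [PartialOrder β] (S : Set β) (F : Set (S → S)) : Set (β → β) :=
  {g | ∃ φ : β ≃o β, ∃ f ∈ F, g = fun x => φ (extendId S f x)}

instance finite_orderIso {β : Type} [PartialOrder β] [Finite β] : Finite (β ≃o β) :=
  Finite.of_injective (fun φ : β ≃o β => (φ : β → β)) DFunLike.coe_injective

/-- Automorphisms of `β` agreeing outside of `S` differ by an automorphism of `S`, while `φ ∘ f̂`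
determines the restriction of `φ` to the complement of `S`. -/
theorem card_aut_mul_le {β : Type} [PartialOrder β] [Finite β] (S : Set β) (F : Set (S → S)) :
    Nat.card (β ≃o β) * F.ncard ≤ Nat.card (S ≃o S) * (autComp S F).ncard := by
  classical
  let r : (β ≃o β) → ((Sᶜ : Set β) → β) := fun φ x => φ x
  -- `rep φ` depends only on the restriction of `φ` to the complement of `S`
  let rep : (β ≃o β) → (β ≃o β) := fun φ => Function.invFun r (r φ)
  have hrep : ∀ φ, r (rep φ) = r φ := fun φ => Function.invFun_eq ⟨φ, rfl⟩
  have hrep' : ∀ φ, ∀ x ∉ S, rep φ x = φ x := fun φ x hx => congrFun (hrep φ) ⟨x, hx⟩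
  have hid : ∀ φ : β ≃o β, ∀ x ∉ S, (φ.trans (rep φ).symm) x = x := by
    intro φ x hx
    simp [← hrep' φ x hx]
  let G : (β ≃o β) × F → (S ≃o S) × autComp S F := fun p =>
    (restrictIso S (p.1.trans (rep p.1).symm) (hid p.1),
      ⟨fun x => rep p.1 (extendId S p.2.1 x), rep p.1, p.2.1, p.2.2, rfl⟩)
  have hG : Function.Injective G := by
    rintro ⟨φ, f, hf⟩ ⟨ψ, g, hg⟩ h
    have h1 := congrArg Prod.fst h
    have h2 : ∀ x, rep φ (extendId S f x) = rep ψ (extendId S g x) :=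
      fun x => congrFun (congrArg Subtype.val (congrArg Prod.snd h)) x
    have h3 : r φ = r ψ := by
      funext x
      have := h2 x
      rw [extendId_not_mem f x.2, extendId_not_mem g x.2, hrep' φ x x.2, hrep' ψ x x.2] at this
      exact this
    have h4 : rep φ = rep ψ := by simp only [rep, h3]
    have h5 : f = g := by
      funext x
      have := h2 x
      rw [h4, extendId_mem f x.2, extendId_mem g x.2] at this
      exact Subtype.ext ((rep ψ).injective this)
    have h6 : φ = ψ := by
      ext x
      by_cases hx : x ∈ S
      · have : (rep φ).symm (φ x) = (rep ψ).symm (ψ x) :=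
          congrArg (fun ρ : S ≃o S => (ρ ⟨x, hx⟩ : β)) h1
        rw [h4] at this
        exact (rep ψ).symm.injective this
      · exact congrFun h3 ⟨x, hx⟩
    subst h5 h6
    rfl
  have := Nat.card_le_card_of_injective G hG
  simpa [Nat.card_prod, Nat.card_coe_set_eq] using this

theorem autComp_subset {β : Type} [PartialOrder β] {S : Set β} (hS : OrdAutonomous β S)
    {F : Set (S → S)} (hF : ∀ f ∈ F, Monotone f) : autComp S F ⊆ {g | Monotone g} := by
  rintro g ⟨φ, f, hf, rfl⟩
  exact φ.monotone.comp (extendId_monotone hS (hF f hf))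

/-! ### Projections of lexicographic sums -/

/-- `π : β → T` exhibits `β` as a lexicographic sum over `T`, the blocks being the (nonempty)
fibres of `π` with the induced order. -/
structure IsLexProj {β T : Type} [PartialOrder β] [PartialOrder T] (π : β → T) : Prop where
  surj : Function.Surjective π
  le_iff : ∀ x y, π x ≠ π y → (x ≤ y ↔ π x < π y)

/-- Every automorphism of `β` maps blocks into blocks. -/
def PreservesBlocks {β T : Type} [PartialOrder β] (π : β → T) : Prop :=
  ∀ (φ : β ≃o β) (x y : β), π x = π y → π (φ x) = π (φ y)

section

variable {β T : Type} [PartialOrder β] [PartialOrder T] {π : β → T}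

theorem IsLexProj.mono (h : IsLexProj π) : Monotone π := by
  intro x y hxy
  by_cases he : π x = π y
  · exact he.le
  · exact ((h.le_iff x y he).1 hxy).le

theorem IsLexProj.lt_of (h : IsLexProj π) {x y : β} (hxy : π x < π y) : x < y :=
  lt_of_le_of_ne ((h.le_iff x y hxy.ne).2 hxy) (fun he => hxy.ne (congrArg π he))

theorem IsLexProj.lt_of_lt (h : IsLexProj π) {x y : β} (hxy : x < y) (hne : π x ≠ π y) :
    π x < π y :=
  (h.le_iff x y hne).1 hxy.le

theorem IsLexProj.autonomous_fiber (h : IsLexProj π) (t : T) :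
    OrdAutonomous β {x | π x = t} := by
  refine ⟨h.surj t, fun z hz => ⟨?_, ?_⟩⟩
  · rintro ⟨a, ha, hza⟩ b hb
    simp only [Set.mem_ofPred_eq] at ha hb hz
    exact h.lt_of (by rw [hb, ← ha]; exact h.lt_of_lt hza (by rw [ha]; exact hz))
  · rintro ⟨a, ha, hza⟩ b hb
    simp only [Set.mem_ofPred_eq] at ha hb hz
    exact h.lt_of (by rw [hb, ← ha]; exact h.lt_of_lt hza (by rw [ha]; exact Ne.symm hz))

theorem IsLexProj.autonomous_image (h : IsLexProj π) {A : Set β} (hA : OrdAutonomous β A) :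
    OrdAutonomous T (π '' A) := by
  refine ⟨hA.1.image π, fun z hz => ?_⟩
  obtain ⟨p, rfl⟩ := h.surj z
  have hp : p ∉ A := fun hp => hz ⟨p, hp, rfl⟩
  have hne : ∀ a ∈ A, π a ≠ π p := fun a ha he => hz ⟨a, ha, he⟩
  constructor
  · rintro ⟨_, ⟨a, ha, rfl⟩, hza⟩ _ ⟨b, hb, rfl⟩
    exact h.lt_of_lt ((hA.2 p hp).1 ⟨a, ha, h.lt_of hza⟩ b hb) (hne b hb).symm
  · rintro ⟨_, ⟨a, ha, rfl⟩, hza⟩ _ ⟨b, hb, rfl⟩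
    exact h.lt_of_lt ((hA.2 p hp).2 ⟨a, ha, h.lt_of hza⟩ b hb) (hne b hb)

theorem OrdAutonomous.image {S : Set β} (hS : OrdAutonomous β S) (φ : β ≃o β) :
    OrdAutonomous β (φ '' S) := by
  refine ⟨hS.1.image φ, fun z hz => ?_⟩
  obtain ⟨p, rfl⟩ := φ.surjective z
  have hp : p ∉ S := fun hp => hz ⟨p, hp, rfl⟩
  constructor
  · rintro ⟨_, ⟨a, ha, rfl⟩, hza⟩ _ ⟨b, hb, rfl⟩
    exact φ.lt_iff_lt.2 ((hS.2 p hp).1 ⟨a, ha, φ.lt_iff_lt.1 hza⟩ b hb)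
  · rintro ⟨_, ⟨a, ha, rfl⟩, hza⟩ _ ⟨b, hb, rfl⟩
    exact φ.lt_iff_lt.2 ((hS.2 p hp).2 ⟨a, ha, φ.lt_iff_lt.1 hza⟩ b hb)

theorem eq_univ_of_not_nontriv [Fintype T] {S : Set T} (hS : OrdAutonomous T S)
    (hn : ¬ NontrivOrdAutonomous T S) (h1 : S.ncard ≠ 1) : S = Set.univ := by
  have : S.ncard = Fintype.card T := by
    by_contra hc
    exact hn ⟨hS, h1, hc⟩
  exact Set.eq_of_subset_of_ncard_le (Set.subset_univ _)
    (by rw [Set.ncard_univ, Nat.card_eq_fintype_card, this])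

/-! ### Automorphisms permute the blocks -/

theorem preserves_of_indecomposable [Fintype T] (h : IsLexProj π)
    (hT : ¬ ∃ S : Set T, NontrivOrdAutonomous T S) (h3 : 3 ≤ Fintype.card T) :
    PreservesBlocks π := by
  classical
  intro φ x y hxy
  by_contra hne
  set A : Set β := φ '' {z | π z = π x} with hAdef
  have hA : OrdAutonomous β A := (h.autonomous_fiber (π x)).image φ
  have hxA : φ x ∈ A := ⟨x, rfl, rfl⟩
  have hyA : φ y ∈ A := ⟨y, hxy.symm, rfl⟩
  have huniv : π '' A = Set.univ := by
    refine eq_univ_of_not_nontriv (h.autonomous_image hA) (fun hc => hT ⟨_, hc⟩) ?_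
    intro h1
    obtain ⟨c, hc⟩ := Set.ncard_eq_one.1 h1
    have hx : π (φ x) ∈ π '' A := ⟨_, hxA, rfl⟩
    have hy : π (φ y) ∈ π '' A := ⟨_, hyA, rfl⟩
    rw [hc] at hx hy
    exact hne (hx.trans hy.symm)
  have hmeet : ∀ t, ∃ a ∈ A, π a = t := fun t => by
    have : t ∈ π '' A := huniv ▸ Set.mem_univ t
    exact this
  -- a point outside of `A`, the image of a point in a different block
  obtain ⟨t, ht⟩ : ∃ t, t ≠ π x := by
    have : Nontrivial T := Fintype.one_lt_card_iff_nontrivial.1 (by omega)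
    exact exists_ne _
  obtain ⟨w, rfl⟩ := h.surj t
  set z := φ w with hz
  have hzA : z ∉ A := by
    rintro ⟨v, hv, hvz⟩
    exact ht (φ.injective hvz ▸ hv)
  -- all elements of `A` relate to `z` alike, so all elements of `T` relate to `π z` alike
  refine hT ⟨{π z}ᶜ, ⟨?_, ?_⟩, ?_, ?_⟩
  · have : Nontrivial T := Fintype.one_lt_card_iff_nontrivial.1 (by omega)
    obtain ⟨s, hs⟩ := exists_ne (π z)
    exact ⟨s, hs⟩
  · intro s hs
    have hs : s = π z := by simpa using hs
    subst hs
    constructor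
    · rintro ⟨s, hs, hlt⟩ u hu
      obtain ⟨a, ha, rfl⟩ := hmeet s
      obtain ⟨b, hb, rfl⟩ := hmeet u
      exact h.lt_of_lt ((hA.2 z hzA).1 ⟨a, ha, h.lt_of hlt⟩ b hb) (Ne.symm hu)
    · rintro ⟨s, hs, hlt⟩ u hu
      obtain ⟨a, ha, rfl⟩ := hmeet s
      obtain ⟨b, hb, rfl⟩ := hmeet u
      exact h.lt_of_lt ((hA.2 z hzA).2 ⟨a, ha, h.lt_of hlt⟩ b hb) hu
  all_goals
    rw [Set.ncard_compl, Set.ncard_singleton, Nat.card_eq_fintype_card]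
    omega

theorem preserves_of_antichains [Fintype T] (h : IsLexProj π)
    (hT : ¬ ∃ S : Set T, NontrivOrdAutonomous T S ∧ IsAntichain (· ≤ ·) S)
    (hP : ∀ x y : β, π x = π y → x ≤ y → x = y) (h3 : 3 ≤ Fintype.card T) :
    PreservesBlocks π := by
  classical
  intro φ x y hxy
  by_contra hne
  set A : Set β := φ '' {z | π z = π x} with hAdef
  have hA : OrdAutonomous β A := (h.autonomous_fiber (π x)).image φ
  have hxA : φ x ∈ A := ⟨x, rfl, rfl⟩
  have hyA : φ y ∈ A := ⟨y, hxy.symm, rfl⟩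
  have hanti : IsAntichain (· ≤ ·) (π '' A) := by
    rintro _ ⟨_, ⟨u, hu, rfl⟩, rfl⟩ _ ⟨_, ⟨v, hv, rfl⟩, rfl⟩ huv hle
    have hlt := h.lt_of (lt_of_le_of_ne hle huv)
    have := φ.lt_iff_lt.1 hlt
    exact this.ne (hP u v (hu.trans (Eq.symm hv)) this.le)
  have huniv : π '' A = Set.univ := by
    refine eq_univ_of_not_nontriv (h.autonomous_image hA) (fun hc => hT ⟨_, hc, hanti⟩) ?_
    intro h1
    obtain ⟨c, hc⟩ := Set.ncard_eq_one.1 h1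
    have hx : π (φ x) ∈ π '' A := ⟨_, hxA, rfl⟩
    have hy : π (φ y) ∈ π '' A := ⟨_, hyA, rfl⟩
    rw [hc] at hx hy
    exact hne (hx.trans hy.symm)
  rw [huniv] at hanti
  -- in an antichain with at least three elements every pair is a nontrivial autonomous antichain
  have hinc : ∀ s t : T, ¬ s < t := fun s t hst =>
    hanti (Set.mem_univ s) (Set.mem_univ t) hst.ne hst.le
  refine hT ⟨{π (φ x), π (φ y)}, ⟨⟨⟨_, Or.inl rfl⟩, fun z _ => ⟨?_, ?_⟩⟩, ?_, ?_⟩,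
    hanti.subset (Set.subset_univ _)⟩
  · rintro ⟨a, -, ha⟩
    exact absurd ha (hinc _ _)
  · rintro ⟨a, -, ha⟩
    exact absurd ha (hinc _ _)
  all_goals
    rw [Set.ncard_pair hne]
    omega

theorem preserves_of_chain [Finite β] (h : IsLexProj π) (hT : ∀ x y : T, x ≤ y ∨ y ≤ x) :
    PreservesBlocks π := by
  -- the initial segments `{z | π z ≤ t}` are invariant, as `φ` preserves their cardinality
  have key : ∀ (φ : β ≃o β) (t : T) (z : β), π z ≤ t → π (φ z) ≤ t := by
    intro φ t z hz
    by_contra hcon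
    set D : Set β := {w | π w ≤ t} with hD
    have hnot : ¬ D ⊆ φ '' D := by
      intro hsub
      have heq : D = φ '' D := Set.eq_of_subset_of_ncard_le hsub
        (by rw [Set.ncard_image_of_injective _ φ.injective])
      have : φ z ∈ D := by rw [heq]; exact ⟨z, hz, rfl⟩
      exact hcon this
    obtain ⟨x, hxD, hxn⟩ := Set.not_subset.1 hnot
    obtain ⟨w, rfl⟩ := φ.surjective x
    have hw : ¬ π w ≤ t := fun hw => hxn ⟨w, hw, rfl⟩
    have h1 : φ w < φ z := h.lt_of (lt_of_le_of_lt hxD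
      (lt_of_le_not_ge ((hT _ _).resolve_left hcon) hcon))
    have h2 : z < w := h.lt_of (lt_of_le_of_lt hz
      (lt_of_le_not_ge ((hT _ _).resolve_left hw) hw))
    exact lt_asymm (φ.lt_iff_lt.1 h1) h2
  have hfix : ∀ (φ : β ≃o β) (z : β), π (φ z) = π z := by
    intro φ z
    refine le_antisymm (key φ _ z le_rfl) ?_
    simpa using key φ.symm _ (φ z) le_rfl
  intro φ x y hxy
  rw [hfix, hfix, hxy]

/-! ### Counting endomorphisms and automorphisms -/

theorem card_end_index_le [Finite β] (h : IsLexProj π) :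
    Set.ncard {f : T → T | Monotone f} ≤ Set.ncard {f : β → β | Monotone f} := by
  have hs : ∀ t, π (Function.surjInv h.surj t) = t := Function.surjInv_eq h.surj
  refine Set.ncard_le_ncard_of_injOn (fun f x => Function.surjInv h.surj (f (π x))) ?_ ?_
    (Set.toFinite _)
  · intro f hf x y hxy
    rcases (hf (h.mono hxy)).eq_or_lt with he | hl
    · simp [he]
    · exact (h.lt_of (by rw [hs, hs]; exact hl)).le
  · intro f _ g _ hfg
    funext t
    obtain ⟨x, rfl⟩ := h.surj t
    have := congrArg π (congrFun hfg x)
    simpa only [hs] using this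

/-- The automorphism of the index set induced by a block-preserving automorphism. -/
noncomputable def inducedIso (h : IsLexProj π) (hb : PreservesBlocks π) (φ : β ≃o β) : T ≃o T :=
  have hs : ∀ t, π (Function.surjInv h.surj t) = t := Function.surjInv_eq h.surj
  have hm : ∀ φ : β ≃o β, Monotone (fun t => π (φ (Function.surjInv h.surj t))) := by
    intro φ s t hst
    rcases hst.eq_or_lt with he | hl
    · simp [he]
    · exact h.mono (φ.monotone (h.lt_of (by rw [hs, hs]; exact hl)).le)
  Equiv.toOrderIso
    { toFun := fun t => π (φ (Function.surjInv h.surj t))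
      invFun := fun t => π (φ.symm (Function.surjInv h.surj t))
      left_inv := fun t => by
        have := hb φ.symm _ _ (hs (π (φ (Function.surjInv h.surj t))))
        simpa [hs] using this
      right_inv := fun t => by
        have := hb φ _ _ (hs (π (φ.symm (Function.surjInv h.surj t))))
        simpa [hs] using this }
    (hm φ) (hm φ.symm)

theorem inducedIso_apply (h : IsLexProj π) (hb : PreservesBlocks π) (φ : β ≃o β) (x : β) :
    inducedIso h hb φ (π x) = π (φ x) :=
  hb φ _ _ (Function.surjInv_eq h.surj (π x))

/-- If blocks have at most `N` elements and are permuted by the automorphisms, then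
an automorphism is determined by the induced automorphism of `T` together with
the positions, inside their blocks, of the images of the points from nontrivial blocks. -/
theorem card_aut_le_index [Finite β] (h : IsLexProj π) (hb : PreservesBlocks π) {N : ℕ}
    (hN : ∀ t, Nat.card {x // π x = t} ≤ N) :
    Nat.card (β ≃o β) ≤ Nat.card (T ≃o T) * N ^ Nat.card {x : β // ∃ y, π y = π x ∧ y ≠ x} := by
  classical
  have : Finite T := Finite.of_surjective π h.surj
  have hcode : ∀ t, ∃ c : {x // π x = t} → Fin N, Function.Injective c := by
    intro t
    have e := Finite.equivFin {x // π x = t}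
    exact ⟨fun x => Fin.castLE (hN t) (e x), (Fin.castLE_injective (hN t)).comp e.injective⟩
  choose c hc using hcode
  let B := {x : β // ∃ y, π y = π x ∧ y ≠ x}
  let G : (β ≃o β) → (T ≃o T) × (B → Fin N) := fun φ =>
    (inducedIso h hb φ, fun x => c (π (φ x.1)) ⟨φ x.1, rfl⟩)
  have hcc : ∀ u v : β, π u = π v → c (π u) ⟨u, rfl⟩ = c (π v) ⟨v, rfl⟩ → u = v := by
    intro u v huv hcuv
    have h1 : ∀ t (ht : π v = t), c (π v) ⟨v, rfl⟩ = c t ⟨v, ht⟩ := by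
      rintro t rfl
      rfl
    rw [h1 (π u) huv.symm] at hcuv
    exact congrArg Subtype.val (hc _ hcuv)
  have hG : Function.Injective G := by
    intro φ ψ hφψ
    have h1 : ∀ x, π (φ x) = π (ψ x) := fun x => by
      rw [← inducedIso_apply h hb, ← inducedIso_apply h hb]
      exact DFunLike.congr_fun (congrArg Prod.fst hφψ) (π x)
    ext x
    by_cases hx : ∃ y, π y = π x ∧ y ≠ x
    · exact hcc _ _ (h1 x) (congrFun (congrArg Prod.snd hφψ) ⟨x, hx⟩)
    · by_contra hne
      refine hx ⟨φ.symm (ψ x), ?_, ?_⟩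
      · simpa using (hb φ.symm _ _ (h1 x)).symm
      · intro he
        exact hne (by rw [← φ.apply_symm_apply (ψ x), he])
  have := Nat.card_le_card_of_injective G hG
  simpa [Nat.card_prod, Nat.card_fun, B] using this

theorem card_orderIso_le {S : Type} [PartialOrder S] [Finite S] {N : ℕ} (hN : Nat.card S ≤ N) :
    Nat.card (S ≃o S) ≤ N ^ N := by
  have h1 := Nat.card_le_card_of_injective (fun φ : S ≃o S => (φ : S → S)) DFunLike.coe_injective
  rw [Nat.card_fun] at h1
  rcases Nat.eq_zero_or_pos N with rfl | hpos
  · have h0 : Nat.card S = 0 := by omega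
    simpa [h0] using h1
  · exact h1.trans ((Nat.pow_le_pow_left hN _).trans (Nat.pow_le_pow_right hpos hN))

/-- Collapsing a nontrivial block to a point and then applying an automorphism gives an
endomorphism from which the collapsed block can be read off. -/
theorem card_nontrivial_mul_le [Finite β] (h : IsLexProj π) {N : ℕ}
    (hN : ∀ t, Nat.card {x // π x = t} ≤ N) (K : Finset T)
    (hK : ∀ t ∈ K, ∃ x y, π x = t ∧ π y = t ∧ x ≠ y) :
    K.card * Nat.card (β ≃o β) ≤ N ^ N * Set.ncard {f : β → β | Monotone f} := by
  classical
  let p : ∀ t, {x | π x = t} := fun t => ⟨Function.surjInv h.surj t, Function.surjInv_eq h.surj t⟩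
  let E : T → Set (β → β) := fun t => autComp {x | π x = t} {fun _ => p t}
  have hE : ∀ t, Nat.card (β ≃o β) ≤ N ^ N * (E t).ncard := by
    intro t
    have h1 := card_aut_mul_le {x | π x = t} {fun _ => p t}
    rw [Set.ncard_singleton, mul_one] at h1
    exact h1.trans (Nat.mul_le_mul_right _ (card_orderIso_le (hN t)))
  have hdisj : (K : Set T).PairwiseDisjoint E := by
    intro s hs t ht hst
    rw [Function.onFun, Set.disjoint_left]
    rintro g ⟨φ, f, hf, hg⟩ ⟨ψ, f', hf', hg'⟩
    obtain ⟨x, y, hx, hy, hxy⟩ := hK s hs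
    rw [Set.mem_singleton_iff] at hf
    have hgxy : g x = g y := by
      rw [hg]
      simp only
      rw [extendId_mem f (show x ∈ {x | π x = s} from hx),
        extendId_mem f (show y ∈ {x | π x = s} from hy), hf]
    rw [hg'] at hgxy
    simp only at hgxy
    rw [extendId_not_mem f' (show x ∉ {x | π x = t} from fun hc => hst (hx.symm.trans hc)),
      extendId_not_mem f' (show y ∉ {x | π x = t} from fun hc => hst (hy.symm.trans hc))] at hgxy
    exact hxy (ψ.injective hgxy)
  have hsum : ∑ t ∈ K, (E t).ncard ≤ Set.ncard {f : β → β | Monotone f} := by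
    have hfin : ∀ t, (E t).Finite := fun t => Set.toFinite _
    have h1 : ((K.biUnion fun t => (hfin t).toFinset).card) = ∑ t ∈ K, (E t).ncard := by
      rw [Finset.card_biUnion]
      · exact Finset.sum_congr rfl fun t _ => (Set.ncard_eq_toFinset_card _ (hfin t)).symm
      · intro s hs t ht hst
        have := hdisj hs ht hst
        rw [Function.onFun] at *
        exact Set.Finite.disjoint_toFinset.2 this
    rw [← h1, ← Set.ncard_coe_finset]
    refine Set.ncard_le_ncard ?_ (Set.toFinite _)
    intro g hg
    simp only [Finset.coe_biUnion, Set.Finite.coe_toFinset, Set.mem_iUnion] at hg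
    obtain ⟨t, -, hgt⟩ := hg
    refine autComp_subset (h.autonomous_fiber t) ?_ hgt
    intro f hf
    rw [Set.mem_singleton_iff] at hf
    rw [hf]
    exact monotone_const
  calc K.card * Nat.card (β ≃o β) = ∑ t ∈ K, Nat.card (β ≃o β) := by simp
    _ ≤ ∑ t ∈ K, N ^ N * (E t).ncard := Finset.sum_le_sum fun t _ => hE t
    _ = N ^ N * ∑ t ∈ K, (E t).ncard := by rw [Finset.mul_sum]
    _ ≤ _ := Nat.mul_le_mul_left _ hsum

end

/-- If `K` contains all indices of nontrivial blocks, the points of `β` lying in nontrivial blocks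
are distributed over at most `|K|` blocks. -/
theorem card_nontrivial_points_le {β T : Type} {π : β → T} [Fintype β] {N : ℕ}
    (hN : ∀ t, Nat.card {x // π x = t} ≤ N) (K : Finset T)
    (hK : ∀ x y, π y = π x → y ≠ x → π x ∈ K) :
    Nat.card {x : β // ∃ y, π y = π x ∧ y ≠ x} ≤ K.card * N := by
  classical
  have h1 : (Finset.univ.filter fun x : β => ∃ y, π y = π x ∧ y ≠ x).card ≤ N * K.card := by
    refine Finset.card_le_mul_card_image_of_maps_to (f := π) (t := K) ?_ N ?_
    · intro x hx
      obtain ⟨y, hy, hyx⟩ := (Finset.mem_filter.1 hx).2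
      exact hK x y hy hyx
    · intro t _
      refine le_trans ?_ (hN t)
      rw [Nat.card_eq_fintype_card, Fintype.card_subtype]
      exact Finset.card_le_card fun x hx => by
        simp only [Finset.mem_filter] at hx ⊢
        exact ⟨Finset.mem_univ _, hx.2⟩
  rw [Nat.card_eq_fintype_card, Fintype.card_subtype, mul_comm]
  exact h1

theorem card_le_index_mul {β T : Type} {π : β → T} [Fintype β] [Fintype T] {N : ℕ}
    (hN : ∀ t, Nat.card {x // π x = t} ≤ N) : Fintype.card β ≤ N * Fintype.card T := by
  classical
  refine Finset.card_le_mul_card_image_of_maps_to (f := π) (fun x _ => Finset.mem_univ _) N ?_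
  intro t _
  refine le_trans ?_ (hN t)
  rw [Nat.card_eq_fintype_card, Fintype.card_subtype]

theorem end_ncard_pos {S : Type} [PartialOrder S] [Finite S] :
    0 < Set.ncard {f : S → S | Monotone f} :=
  (Set.ncard_pos (Set.toFinite _)).2 ⟨id, monotone_id⟩

/-! ### Extracting the projection from the class of lexicographic sums -/

theorem lexLE_same {T : Type} [PartialOrder T] {P : T → Type} [∀ t, PartialOrder (P t)]
    {t : T} (p q : P t) : lexLE (⟨t, p⟩ : Σ t, P t) ⟨t, q⟩ ↔ p ≤ q := by
  simp [lexLE]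

/-- All that is used about a member of `LexClass C`: its projection onto the index set `T`, that
`T` and the fibres belong to `C`, and that blocks are permuted if `T` has at least three
elements (a two-element antichain `T` is a genuine exception). -/
theorem exists_isLexProj (C : ∀ β : Type, PartialOrder β → Fintype β → Prop)
    (hiso : ∀ (γ δ : Type) [iγ : PartialOrder γ] [fγ : Fintype γ]
      [iδ : PartialOrder δ] [fδ : Fintype δ],
      C γ iγ fγ → Nonempty (γ ≃o δ) → C δ iδ fδ)
    (β : Type) [iβ : PartialOrder β] [fβ : Fintype β] (hβ : LexClass C β iβ fβ) :
    ∃ (T : Type) (iT : PartialOrder T) (fT : Fintype T) (π : β → T),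
      IsLexProj π ∧ C T iT fT ∧
      (∀ (t : T) (f : Fintype {x | π x = t}), C {x | π x = t} inferInstance f) ∧
      (3 ≤ Fintype.card T → PreservesBlocks π) := by
  obtain ⟨T, iT, fT, P, iP, fP, -, hne, hCT, hCP, hcase, e, he⟩ := hβ
  have hproj : IsLexProj (fun x => (e x).1) := by
    refine ⟨fun t => ?_, fun x y hxy => ?_⟩
    · obtain ⟨p⟩ := hne t
      exact ⟨e.symm ⟨t, p⟩, by simp⟩
    · rw [he]
      exact ⟨fun h => h.resolve_right fun ⟨h, _⟩ => hxy h, Or.inl⟩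
  refine ⟨T, iT, fT, fun x => (e x).1, hproj, hCT, fun t f => ?_, fun h3 => ?_⟩
  · refine hiso (P t) _ (hCP t) ⟨?_⟩
    let g : P t → {x | (e x).1 = t} := fun p => ⟨e.symm ⟨t, p⟩, by simp⟩
    have hg : Function.Bijective g := by
      constructor
      · intro p q hpq
        have := e.symm.injective (congrArg Subtype.val hpq)
        simpa using this
      · rintro ⟨x, rfl⟩
        exact ⟨(e x).2, Subtype.ext (by simp [g])⟩
    refine ⟨Equiv.ofBijective g hg, ?_⟩
    intro p q
    have : e.symm ⟨t, p⟩ ≤ e.symm ⟨t, q⟩ ↔ p ≤ q := by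
      rw [he]
      simp only [Equiv.apply_symm_apply]
      exact lexLE_same p q
    exact this
  · rcases hcase with (hind | hchain) | ⟨hanti, hP⟩
    · exact preserves_of_indecomposable hproj hind h3
    · exact preserves_of_chain hproj hchain
    · refine preserves_of_antichains hproj hanti (fun x y hxy hle => ?_) h3
      rw [he] at hle
      apply e.injective
      generalize e x = u at *
      generalize e y = v at *
      obtain ⟨s, p⟩ := u
      obtain ⟨t, q⟩ := v
      have hxy : s = t := hxy
      subst hxy
      rw [hP s p q ((lexLE_same p q).1 hle)]

/-- if the Automorphism Conjecture holds for a class `C` of finite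
ordered sets closed under order-isomorphism, then it holds for the class `ℒ_C`
of lexicographic sums described above. -/
theorem stmt18 (C : ∀ β : Type, PartialOrder β → Fintype β → Prop)
    (hiso : ∀ (γ δ : Type) [iγ : PartialOrder γ] [fγ : Fintype γ]
      [iδ : PartialOrder δ] [fδ : Fintype δ],
      C γ iγ fγ → Nonempty (γ ≃o δ) → C δ iδ fδ)
    (hC : AutoConjHoldsFor C) :
    AutoConjHoldsFor (LexClass C) := by
  classical
  intro ε hε
  obtain ⟨N₁, hN₁⟩ := hC ε hε
  -- blocks with more than `N` elements are large
  set N : ℕ := N₁ + 1 with hNdef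
  -- at least `K` nontrivial blocks are many
  obtain ⟨K, hK⟩ := exists_nat_gt (((N ^ N : ℕ) : ℝ) / ε)
  set M : ℕ := N ^ (K * N) with hM
  have hMpos : 0 < M := Nat.pow_pos (by omega)
  have hMpos' : (0 : ℝ) < M := by exact_mod_cast hMpos
  obtain ⟨N₂, hN₂⟩ := hC (ε / M) (div_pos hε hMpos')
  refine ⟨N * (N₂ + 3), ?_⟩
  intro β iβ fβ hβ hcard
  obtain ⟨T, iT, fT, π, hπ, hCT, hCP, hpres⟩ := exists_isLexProj C hiso β hβ
  have hend : (0 : ℝ) < Set.ncard {f : β → β | Monotone f} := by exact_mod_cast end_ncard_pos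
  by_cases hbig : ∃ t, N < Nat.card {x // π x = t}
  · obtain ⟨t, ht⟩ := hbig
    have hlt := hN₁ {x | π x = t} (hCP t inferInstance) (by
      have : N < Fintype.card {x | π x = t} := by
        rw [← Nat.card_eq_fintype_card]
        exact ht
      omega)
    have h1 := card_aut_mul_le {x | π x = t} {f | Monotone f}
    have h2 : (autComp {x | π x = t} {f | Monotone f}).ncard ≤
        Set.ncard {f : β → β | Monotone f} :=
      Set.ncard_le_ncard (autComp_subset (hπ.autonomous_fiber t) fun f hf => hf) (Set.toFinite _)
    have h3 : (Nat.card (β ≃o β) : ℝ) * Set.ncard {f : {x | π x = t} → {x | π x = t} | Monotone f} ≤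
        Nat.card ({x | π x = t} ≃o {x | π x = t}) * Set.ncard {f : β → β | Monotone f} := by
      exact_mod_cast h1.trans (Nat.mul_le_mul_left _ h2)
    have hS : (0 : ℝ) < Set.ncard {f : {x | π x = t} → {x | π x = t} | Monotone f} := by
      exact_mod_cast end_ncard_pos
    refine lt_of_mul_lt_mul_right (h3.trans_lt ?_) hS.le
    calc _ < _ := mul_lt_mul_of_pos_right hlt hend
      _ = _ := by ring
  · have hsmall : ∀ t, Nat.card {x // π x = t} ≤ N := fun t => by
      by_contra hc
      exact hbig ⟨t, not_le.1 hc⟩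
    have hT : N₂ + 3 ≤ Fintype.card T :=
      Nat.le_of_mul_le_mul_left (hcard.trans (card_le_index_mul hsmall)) (by omega)
    let L : Finset T := Finset.univ.filter fun t => ∃ x y, π x = t ∧ π y = t ∧ x ≠ y
    rcases le_total K L.card with hKL | hKL
    · have h1 := card_nontrivial_mul_le hπ hsmall L fun t ht => (Finset.mem_filter.1 ht).2
      have h2 : (K : ℝ) * Nat.card (β ≃o β) ≤
          ((N ^ N : ℕ) : ℝ) * Set.ncard {f : β → β | Monotone f} := by
        exact_mod_cast (Nat.mul_le_mul_right _ hKL).trans h1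
      rw [div_lt_iff₀ hε] at hK
      have hKpos : (0 : ℝ) < K := by
        rcases Nat.eq_zero_or_pos K with rfl | h
        · have : (0 : ℝ) ≤ ((N ^ N : ℕ) : ℝ) := Nat.cast_nonneg _
          simp only [Nat.cast_zero, zero_mul] at hK
          exact absurd hK (not_lt.2 this)
        · exact_mod_cast h
      refine lt_of_mul_lt_mul_left (h2.trans_lt ?_) hKpos.le
      calc _ < _ := mul_lt_mul_of_pos_right hK hend
        _ = _ := by ring
    · have h1 := card_aut_le_index hπ (hpres (by omega)) hsmall
      have h2 := card_nontrivial_points_le hsmall L fun x y hxy hne =>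
        Finset.mem_filter.2 ⟨Finset.mem_univ _, y, x, hxy, rfl, hne⟩
      have h3 : Nat.card (β ≃o β) ≤ Nat.card (T ≃o T) * M :=
        h1.trans (Nat.mul_le_mul_left _ (Nat.pow_le_pow_right (by omega)
          (h2.trans (Nat.mul_le_mul_right _ hKL))))
      have h4 : (Nat.card (β ≃o β) : ℝ) ≤ Nat.card (T ≃o T) * M := by exact_mod_cast h3
      have h5 := hN₂ T hCT (by omega)
      have h6 : (Set.ncard {f : T → T | Monotone f} : ℝ) ≤ Set.ncard {f : β → β | Monotone f} := by
        exact_mod_cast card_end_index_le hπ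
      calc (Nat.card (β ≃o β) : ℝ) ≤ Nat.card (T ≃o T) * M := h4
        _ < ε / M * Set.ncard {f : T → T | Monotone f} * M := mul_lt_mul_of_pos_right h5 hMpos'
        _ = ε * Set.ncard {f : T → T | Monotone f} := by field_simp
        _ ≤ _ := mul_le_mul_of_nonneg_left h6 hε.le
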